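/- Let n ≥ 3 be an integer and let λ be a real number with 0 < λ ≤ 2n/(n² − n + 1). If f is a close-to-convex function on the unit disk with Taylor coefficients a_k, then |λ a_n² − a_{2n−1}| ≤ 2n − 1. -/

import Mathlib

open Complex Metric

/-- The k-th Taylor coefficient of `f` at `0`: `a_k = f^{(k)}(0)/k!`. -/
noncomputable def taylorCoeff (f : ℂ → ℂ) (k : ℕ) : ℂ :=
  iteratedDeriv k f 0 / (Nat.factorial k)

/-- `g` is a (normalized) starlike function on the unit disk. -/
def IsStarlikeFn (g : ℂ → ℂ) : Prop :=
  DifferentiableOn ℂ g (ball (0 : ℂ) 1) ∧ g 0 = 0 ∧ deriv g 0 = 1 ∧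
    ∀ z ∈ ball (0 : ℂ) 1 \ {0}, 0 < (z * deriv g z / g z).re

/-- `f` is a (normalized) close-to-convex function on the unit disk. -/
def IsCloseToConvex (f : ℂ → ℂ) : Prop :=
  DifferentiableOn ℂ f (ball (0 : ℂ) 1) ∧ f 0 = 0 ∧ deriv f 0 = 1 ∧
    ∃ θ : ℝ, ∃ g : ℂ → ℂ, IsStarlikeFn g ∧
      ∀ z ∈ ball (0 : ℂ) 1 \ {0},
        0 < (Complex.exp (θ * Complex.I) * z * deriv f z / g z).re

/-!
A close-to-convex `f` has `f' = q h²`, where `q` is a Carathéodory function up to a rotation of its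
values and `z h²` is the starlike function attached to `f`; by the Marx–Strohhäcker theorem
`1 / 2 < re h`. Herglotz' theorem makes the Taylor series of `h` an average of geometric series
`1 / (1 - xX)` and that of `q` an average of `(1 + cX) / (1 - xX)`. Since
`1 / ((1 - xX)ᵈ⁺¹ (1 - yX))` is the average of `1 / (1 - aX)ᵈ⁺²` over the segment from `y` to `x`
with weight `(d + 1) tᵈ`, the series of `f'` lies in the closed convex hull of the kernels
`(1 + cX) / (1 - aX)³` with `‖a‖, ‖c‖ ≤ 1`.

Rotating by a unit `u` with `u² (λ aₙ² - a₂ₙ₋₁) ≥ 0`, it suffices to bound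
`λ (re (u aₙ))² - re (u² a₂ₙ₋₁)`, which is a convex function of `f'`, hence only needs to be
bounded at the kernels. There it becomes a quadratic inequality in two points of the unit disk, in
which `2n / (n² - n + 1)` is the best constant allowed by the Cauchy–Schwarz inequality.
-/

open MeasureTheory Set
open scoped PowerSeries PowerSeries.WithPiTopology ComplexConjugate Topology Pointwise

section ClosedConvexHull

theorem mapsTo_closedConvexHull {E F : Type*} [AddCommGroup E] [Module ℝ E] [TopologicalSpace E]
    [AddCommGroup F] [Module ℝ F] [TopologicalSpace F] {S : Set E} {T : Set F} (f : E →ᵃ[ℝ] F)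
    (hf : Continuous f) (h : MapsTo f S (closedConvexHull ℝ T)) :
    MapsTo f (closedConvexHull ℝ S) (closedConvexHull ℝ T) :=
  closedConvexHull_min h (convex_closedConvexHull.affine_preimage f)
    (isClosed_closedConvexHull.preimage hf)

variable {A : Type*} [Ring A] [Algebra ℝ A] [TopologicalSpace A]

theorem mul_mem_closedConvexHull_mul [ContinuousMul A] {S T : Set A} {p q : A}
    (hp : p ∈ closedConvexHull ℝ S) (hq : q ∈ closedConvexHull ℝ T) :
    p * q ∈ closedConvexHull ℝ (S * T) :=
  mapsTo_closedConvexHull (LinearMap.mulRight ℝ q).toAffineMap (continuous_mul_const q)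
    (fun s hs ↦ mapsTo_closedConvexHull (LinearMap.mulLeft ℝ s).toAffineMap
      (continuous_const_mul s) (fun _ ht ↦ subset_closedConvexHull (mul_mem_mul hs ht)) hq) hp

theorem mul_add_mem_closedConvexHull_image [IsTopologicalRing A] {S : Set A} {p : A} (a b : A)
    (hp : p ∈ closedConvexHull ℝ S) :
    a * p + b ∈ closedConvexHull ℝ ((fun s ↦ a * s + b) '' S) :=
  mapsTo_closedConvexHull ((LinearMap.mulLeft ℝ a).toAffineMap + AffineMap.const ℝ A b)
    ((continuous_const_mul a).add continuous_const)
    (fun _ hs ↦ subset_closedConvexHull (mem_image_of_mem _ hs)) hp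

end ClosedConvexHull

section IntegralMean

variable {α ι E : Type*} [MeasurableSpace α] [NormedAddCommGroup E] [NormedSpace ℝ E]
  [CompleteSpace E]

theorem pi_integral_mem_of_convex_of_isClosed {μ : Measure α} [IsProbabilityMeasure μ]
    {K : Set (ι → E)} (hconv : Convex ℝ K) (hclosed : IsClosed K) {f : α → ι → E}
    (hfK : ∀ᵐ x ∂μ, f x ∈ K) (hf : ∀ i, Integrable (fun x ↦ f x i) μ) :
    (fun i ↦ ∫ x, f x i ∂μ) ∈ K := by
  by_contra hnot
  obtain ⟨J, u, hu, huK⟩ := isOpen_pi_iff.1 hclosed.isOpen_compl _ hnot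
  let restr : (ι → E) →L[ℝ] (J → E) := ContinuousLinearMap.pi fun j ↦ .proj (j : ι)
  have hint : Integrable (fun x ↦ restr (f x)) μ := Integrable.of_eval fun j ↦ hf j
  have hmem : ∫ x, restr (f x) ∂μ ∈ closure (restr '' K) :=
    (hconv.linear_image restr.toLinearMap).closure.integral_mem isClosed_closure
      (hfK.mono fun x hx ↦ subset_closure (mem_image_of_mem _ hx)) hint
  have hopen : IsOpen (univ.pi fun j : J ↦ u j) :=
    isOpen_set_pi finite_univ fun j _ ↦ (hu j j.2).1
  obtain ⟨_, hv, p, hp, rfl⟩ := mem_closure_iff.1 hmem _ hopen fun j _ ↦ by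
    rw [eval_integral fun j ↦ hint.eval j]
    exact (hu j j.2).2
  exact huK (fun j hj ↦ hv ⟨j, hj⟩ (mem_univ _)) hp

theorem pi_intervalIntegral_smul_mem_of_convex_of_isClosed {K : Set (ι → E)} (hconv : Convex ℝ K)
    (hclosed : IsClosed K) {a b : ℝ} (hab : a ≤ b) {w : ℝ → ℝ} (hw : Continuous w)
    (hw0 : ∀ t ∈ Ioc a b, 0 ≤ w t) (hw1 : ∫ t in a..b, w t = 1) {f : ℝ → ι → E}
    (hf : Continuous f) (hfK : ∀ t ∈ Ioc a b, f t ∈ K) :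
    (fun i ↦ ∫ t in a..b, w t • f t i) ∈ K := by
  let ν := volume.restrict (Ioc a b)
  let μ := ν.withDensity fun t ↦ ((w t).toNNReal : ENNReal)
  have hw0' : ∀ᵐ t ∂ν, 0 ≤ w t := (ae_restrict_mem measurableSet_Ioc).mono hw0
  have hwm : Measurable fun t ↦ (w t).toNNReal := hw.measurable.real_toNNReal
  have toNNReal_smul (i : ι) : (fun t ↦ (w t).toNNReal • f t i) =ᵐ[ν] fun t ↦ w t • f t i := by
    filter_upwards [hw0'] with t ht
    rw [NNReal.smul_def, Real.coe_toNNReal _ ht]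
  have : IsProbabilityMeasure μ := by
    refine ⟨?_⟩
    rw [withDensity_apply _ .univ, Measure.restrict_univ]
    change ∫⁻ t, ENNReal.ofReal (w t) ∂ν = 1
    rw [← ofReal_integral_eq_lintegral_ofReal _ hw0', ← intervalIntegral.integral_of_le hab, hw1,
      ENNReal.ofReal_one]
    exact hw.integrableOn_Ioc
  have hfi (i : ι) : Integrable (fun t ↦ f t i) μ := by
    rw [integrable_withDensity_iff_integrable_smul hwm, integrable_congr (toNNReal_smul i)]
    exact (hw.smul ((continuous_apply i).comp hf)).integrableOn_Ioc
  convert pi_integral_mem_of_convex_of_isClosed (μ := μ) hconv hclosed ?_ hfi using 2 with i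
  · rw [integral_withDensity_eq_integral_smul hwm, integral_congr_ae (toNNReal_smul i),
      intervalIntegral.integral_of_le hab]
  · exact (withDensity_absolutelyContinuous _ _).ae_le
      ((ae_restrict_mem measurableSet_Ioc).mono hfK)

theorem continuous_powerSeries_mk : Continuous (PowerSeries.mk : (ℕ → ℂ) → ℂ⟦X⟧) :=
  continuous_pi fun _ ↦ continuous_apply _

theorem powerSeries_mem_of_coeff_eq_intervalIntegral {K : Set ℂ⟦X⟧} (hconv : Convex ℝ K)
    (hclosed : IsClosed K) {a b : ℝ} (hab : a ≤ b) {w : ℝ → ℝ} (hw : Continuous w)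
    (hw0 : ∀ t ∈ Ioc a b, 0 ≤ w t) (hw1 : ∫ t in a..b, w t = 1) {P : ℝ → ℂ⟦X⟧}
    (hP : Continuous P) (hPK : ∀ t ∈ Ioc a b, P t ∈ K) {p : ℂ⟦X⟧}
    (hp : ∀ k, PowerSeries.coeff k p = ∫ t in a..b, w t • PowerSeries.coeff k (P t)) : p ∈ K := by
  have hlin : IsLinearMap ℝ (PowerSeries.mk : (ℕ → ℂ) → ℂ⟦X⟧) :=
    ⟨fun _ _ ↦ rfl, fun _ _ ↦ rfl⟩
  have mk_coeff (q : ℂ⟦X⟧) : PowerSeries.mk (fun k ↦ PowerSeries.coeff k q) = q :=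
    PowerSeries.ext fun k ↦ PowerSeries.coeff_mk k _
  have hmem := pi_intervalIntegral_smul_mem_of_convex_of_isClosed
    (hconv.is_linear_preimage hlin) (hclosed.preimage continuous_powerSeries_mk) hab hw hw0 hw1
    (f := fun t k ↦ PowerSeries.coeff k (P t))
    (continuous_pi fun k ↦ (PowerSeries.WithPiTopology.continuous_coeff ℂ k).comp hP)
    (fun t ht ↦ by simpa only [mem_preimage, mk_coeff] using hPK t ht)
  convert mem_preimage.1 hmem
  ext k
  rw [hp, PowerSeries.coeff_mk]

end IntegralMean

section Kernels

/-- The expansion of `(1 - xX)⁻ᵈ⁻¹`; the exponent is shifted so that no case `d = 0` arises. -/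
noncomputable def invPowSeries (d : ℕ) (x : ℂ) : ℂ⟦X⟧ :=
  .mk fun k ↦ (d + k).choose d * x ^ k

theorem coeff_invPowSeries (d : ℕ) (x : ℂ) (k : ℕ) :
    PowerSeries.coeff k (invPowSeries d x) = (d + k).choose d * x ^ k :=
  PowerSeries.coeff_mk _ _

@[simp]
theorem constantCoeff_invPowSeries (d : ℕ) (x : ℂ) :
    PowerSeries.constantCoeff (invPowSeries d x) = 1 := by
  rw [← PowerSeries.coeff_zero_eq_constantCoeff_apply, coeff_invPowSeries]
  simp

theorem continuous_invPowSeries (d : ℕ) : Continuous (invPowSeries d) :=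
  continuous_powerSeries_mk.comp (continuous_pi fun k ↦ by fun_prop)

theorem coeff_succ_one_sub_C_mul_X_mul (y : ℂ) (p : ℂ⟦X⟧) (k : ℕ) :
    PowerSeries.coeff (k + 1) ((1 - .C y * .X) * p) =
      PowerSeries.coeff (k + 1) p - y * PowerSeries.coeff k p := by
  rw [sub_mul, one_mul, map_sub, mul_assoc, PowerSeries.coeff_C_mul, PowerSeries.coeff_succ_X_mul]

theorem one_sub_C_mul_X_mul_invPowSeries_zero (y : ℂ) :
    (1 - .C y * .X) * invPowSeries 0 y = 1 := by
  ext (_ | k)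
  · simp
  · rw [coeff_succ_one_sub_C_mul_X_mul]
    simp [coeff_invPowSeries, PowerSeries.coeff_one, pow_succ']

theorem hasDerivAt_lineMap_ofReal (x y : ℂ) (t : ℝ) :
    HasDerivAt (fun s : ℝ ↦ y + s * (x - y)) (x - y) t := by
  simpa using ((ofRealCLM.hasDerivAt (x := t)).mul_const (x - y)).const_add y

theorem hasDerivAt_pow_mul_coeff_invPowSeries (d k : ℕ) (x y : ℂ) (t : ℝ) :
    HasDerivAt
      (fun s : ℝ ↦ (s : ℂ) ^ (d + 1) * PowerSeries.coeff k (invPowSeries d (y + s * (x - y))))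
      ((d + 1) * t ^ d * PowerSeries.coeff k
        ((1 - .C y * .X) * invPowSeries (d + 1) (y + t * (x - y)))) t := by
  have hpow := ((hasDerivAt_lineMap_ofReal x y t).fun_pow k).const_mul ((d + k).choose d : ℂ)
  simp only [coeff_invPowSeries]
  refine ((ofRealCLM.hasDerivAt.fun_pow (d + 1)).mul hpow).congr_deriv ?_
  cases k with
  | zero => simp
  | succ k =>
    have choose_mul_add : (d + 1 + (k + 1) : ℂ) * (d + (k + 1)).choose d =
        (d + 1 + (k + 1)).choose (d + 1) * (d + 1) := by
      have := Nat.add_one_mul_choose_eq (d + (k + 1)) d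
      rw [show d + (k + 1) + 1 = d + 1 + (k + 1) by ring] at this
      exact_mod_cast this
    have choose_mul_sub : ((d + 1 + k).choose (d + 1) : ℂ) * (d + 1) =
        (d + (k + 1)).choose d * (k + 1) := by
      have := Nat.choose_succ_right_eq (d + (k + 1)) d
      rw [Nat.add_sub_cancel_left, show d + (k + 1) = d + 1 + k by ring] at this
      rw [show d + (k + 1) = d + 1 + k by ring]
      exact_mod_cast this
    rw [coeff_succ_one_sub_C_mul_X_mul, coeff_invPowSeries, coeff_invPowSeries]
    simp only [ofRealCLM_apply, add_tsub_cancel_right, ofReal_one]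
    push_cast
    linear_combination ((t : ℂ) ^ d * (y + t * (x - y)) ^ (k + 1)) * choose_mul_add
      + (t : ℂ) ^ d * y * (y + t * (x - y)) ^ k * choose_mul_sub

theorem coeff_invPowSeries_eq_intervalIntegral (d k : ℕ) (x y : ℂ) :
    PowerSeries.coeff k (invPowSeries d x) =
      ∫ t : ℝ in 0..1, ((d + 1) * t ^ d : ℝ) • PowerSeries.coeff k
        ((1 - .C y * .X) * invPowSeries (d + 1) (y + t * (x - y))) := by
  have hline : Continuous fun t : ℝ ↦ y + t * (x - y) := by fun_prop
  have hcoeff : Continuous fun t : ℝ ↦ PowerSeries.coeff k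
      ((1 - .C y * .X) * invPowSeries (d + 1) (y + t * (x - y))) :=
    (PowerSeries.WithPiTopology.continuous_coeff ℂ k).comp
      (continuous_const.mul ((continuous_invPowSeries _).comp hline))
  have hcont : Continuous fun t : ℝ ↦ ((d + 1) * t ^ d : ℝ) • PowerSeries.coeff k
      ((1 - .C y * .X) * invPowSeries (d + 1) (y + t * (x - y))) := by fun_prop
  rw [intervalIntegral.integral_eq_sub_of_hasDerivAt
    (fun t _ ↦ (hasDerivAt_pow_mul_coeff_invPowSeries d k x y t).congr_deriv (by simp))
    (hcont.intervalIntegrable 0 1)]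
  simp

theorem invPowSeries_mul_invPowSeries_zero_mem_closedConvexHull (d : ℕ) {s : Set ℂ}
    (hs : Convex ℝ s) {x y : ℂ} (hx : x ∈ s) (hy : y ∈ s) :
    invPowSeries d x * invPowSeries 0 y ∈ closedConvexHull ℝ (invPowSeries (d + 1) '' s) := by
  refine powerSeries_mem_of_coeff_eq_intervalIntegral
    (K := LinearMap.mulRight ℝ (invPowSeries 0 y) ⁻¹'
      closedConvexHull ℝ (invPowSeries (d + 1) '' s))
    (convex_closedConvexHull.linear_preimage _)
    (isClosed_closedConvexHull.preimage (continuous_mul_const _)) zero_le_one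
    (w := fun t ↦ (d + 1) * t ^ d) (by fun_prop) (fun t ht ↦ ?_) ?_ ?_ (fun t ht ↦ ?_)
    (coeff_invPowSeries_eq_intervalIntegral d · x y)
  · have := ht.1
    positivity
  · rw [intervalIntegral.integral_const_mul, integral_pow]
    field_simp
    simp
  · exact continuous_const.mul ((continuous_invPowSeries _).comp (by fun_prop))
  · have hmem : y + t * (x - y) ∈ s := by
      simpa using hs.add_smul_sub_mem hy hx ⟨ht.1.le, ht.2⟩
    rw [mem_preimage, LinearMap.mulRight_apply, mul_right_comm,
      one_sub_C_mul_X_mul_invPowSeries_zero, one_mul]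
    exact subset_closedConvexHull (mem_image_of_mem _ hmem)

end Kernels

section TaylorSeries

/-- The Taylor series of `f` at `0`, as a formal power series. -/
noncomputable def taylorSeries (f : ℂ → ℂ) : ℂ⟦X⟧ :=
  .mk (taylorCoeff f)

@[simp]
theorem coeff_taylorSeries (f : ℂ → ℂ) (k : ℕ) :
    PowerSeries.coeff k (taylorSeries f) = taylorCoeff f k :=
  PowerSeries.coeff_mk _ _

theorem taylorCoeff_deriv (f : ℂ → ℂ) (k : ℕ) :
    taylorCoeff (deriv f) k = (k + 1) * taylorCoeff f (k + 1) := by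
  rw [taylorCoeff, taylorCoeff, iteratedDeriv_succ', Nat.factorial_succ]
  push_cast
  field_simp

theorem taylorSeries_congr {f g : ℂ → ℂ} (h : f =ᶠ[𝓝 0] g) : taylorSeries f = taylorSeries g := by
  ext k
  rw [coeff_taylorSeries, coeff_taylorSeries, taylorCoeff, taylorCoeff, h.iteratedDeriv_eq]

theorem taylorSeries_const (c : ℂ) : taylorSeries (fun _ ↦ c) = .C c := by
  ext (_ | k) <;> simp [taylorCoeff, iteratedDeriv_const, PowerSeries.coeff_C]

theorem taylorSeries_add {f g : ℂ → ℂ} (hf : AnalyticAt ℂ f 0) (hg : AnalyticAt ℂ g 0) :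
    taylorSeries (fun z ↦ f z + g z) = taylorSeries f + taylorSeries g := by
  ext k
  simp only [map_add, coeff_taylorSeries, taylorCoeff]
  rw [iteratedDeriv_fun_add hf.contDiffAt hg.contDiffAt, add_div]

theorem taylorSeries_mul {f g : ℂ → ℂ} (hf : AnalyticAt ℂ f 0) (hg : AnalyticAt ℂ g 0) :
    taylorSeries (fun z ↦ f z * g z) = taylorSeries f * taylorSeries g := by
  ext k
  simp only [PowerSeries.coeff_mul, coeff_taylorSeries, taylorCoeff]
  rw [iteratedDeriv_fun_mul hf.contDiffAt hg.contDiffAt, Finset.sum_div,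
    Finset.Nat.sum_antidiagonal_eq_sum_range_succ_mk]
  refine Finset.sum_congr rfl fun i hi ↦ ?_
  have hik : i ≤ k := by simpa [Nat.lt_succ_iff] using hi
  have hfact : (k.choose i * i.factorial * (k - i).factorial : ℂ) = k.factorial := by
    exact_mod_cast Nat.choose_mul_factorial_mul_factorial hik
  rw [← hfact]
  have hchoose : (k.choose i : ℂ) ≠ 0 := mod_cast (Nat.choose_pos hik).ne'
  field_simp

theorem taylorSeries_const_mul_add_const {f : ℂ → ℂ} (hf : AnalyticAt ℂ f 0) (a b : ℂ) :
    taylorSeries (fun z ↦ a * f z + b) = .C a * taylorSeries f + .C b := by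
  rw [taylorSeries_add (analyticAt_const.fun_mul hf) analyticAt_const,
    taylorSeries_mul analyticAt_const hf, taylorSeries_const, taylorSeries_const]

end TaylorSeries

section Herglotz

variable {h : ℂ → ℂ} {r : ℝ}

theorem circleAverage_mul_div_pow (hr : 0 < r) (hh : DiffContOnCl ℂ h (ball 0 r)) (k : ℕ) :
    Real.circleAverage (fun z ↦ h z * (r / z) ^ k) 0 r = taylorCoeff h k * r ^ k := by
  have integrand_eq : (fun z : ℂ ↦ (z - 0)⁻¹ • (h z * (r / z) ^ k)) =
      fun z ↦ (r ^ k : ℂ) • (1 / (z - 0) ^ (k + 1)) • h z := by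
    ext z
    simp only [sub_zero, smul_eq_mul, pow_succ, one_div, mul_inv, div_pow]
    ring
  rw [Real.circleAverage_eq_circleIntegral hr.ne', integrand_eq, circleIntegral.integral_smul,
    hh.circleIntegral_one_div_sub_center_pow_smul hr k, taylorCoeff, smul_eq_mul, smul_eq_mul,
    smul_eq_mul]
  field_simp [two_pi_I_ne_zero]

theorem ofReal_div_eq_conj_div_of_mem_sphere {z : ℂ} (hr : r ≠ 0) (hz : z ∈ sphere (0 : ℂ) r) :
    r / z = conj (z / r) := by
  have hnorm : ‖z‖ = r := mem_sphere_zero_iff_norm.1 hz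
  have hz0 : z ≠ 0 := norm_ne_zero_iff.1 (hnorm ▸ hr)
  have hmul : z * conj z = r ^ 2 := by rw [mul_conj', hnorm]
  rw [map_div₀, conj_ofReal, div_eq_div_iff hz0 (ofReal_ne_zero.2 hr), mul_comm (conj z), hmul, sq]

theorem circleAverage_conj_mul_div_pow (hr : 0 < r) (hh : DiffContOnCl ℂ h (ball 0 r))
    (h0 : h 0 = 0) (k : ℕ) :
    Real.circleAverage (fun z ↦ conj (h z) * (r / z) ^ k) 0 r = 0 := by
  have hdiff : DiffContOnCl ℂ (fun z ↦ h z * (z / r) ^ k) (ball 0 r) :=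
    hh.smul (Differentiable.diffContOnCl (f := fun z : ℂ ↦ (z / r) ^ k) (by fun_prop))
  have hint : CircleIntegrable (fun z ↦ h z * (z / r) ^ k) 0 r :=
    (hdiff.continuousOn_ball.mono sphere_subset_closedBall).circleIntegrable hr.le
  calc Real.circleAverage (fun z ↦ conj (h z) * (r / z) ^ k) 0 r
    _ = Real.circleAverage (conjCLE.toContinuousLinearMap ∘ fun z ↦ h z * (z / r) ^ k) 0 r := by
        refine Real.circleAverage_congr_sphere fun z hz ↦ ?_
        rw [abs_of_pos hr] at hz
        simp [ofReal_div_eq_conj_div_of_mem_sphere hr.ne' hz]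
    _ = conj (Real.circleAverage (fun z ↦ h z * (z / r) ^ k) 0 r) :=
        conjCLE.toContinuousLinearMap.circleAverage_comp_comm hint
    _ = 0 := by
        rw [DiffContOnCl.circleAverage (by rwa [abs_of_pos hr])]
        simp [h0]

theorem circleAverage_two_mul_re_sub_one_mul_div_pow (hr : 0 < r)
    (hh : DiffContOnCl ℂ h (ball 0 r)) (h0 : h 0 = 1) (k : ℕ) :
    Real.circleAverage (fun z ↦ ((2 * (h z).re - 1 : ℝ) : ℂ) * (r / z) ^ k) 0 r =
      taylorCoeff h k * r ^ k := by
  have hsub : DiffContOnCl ℂ (fun z ↦ h z - 1) (ball 0 r) := hh.sub diffContOnCl_const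
  have hcont : ContinuousOn h (sphere 0 r) := hh.continuousOn_ball.mono sphere_subset_closedBall
  have hdiv : ContinuousOn (fun z : ℂ ↦ (r / z) ^ k) (sphere 0 r) :=
    (continuousOn_const.div continuousOn_id fun z hz ↦ ne_of_mem_sphere hz hr.ne').pow k
  have integrand_eq : (fun z ↦ ((2 * (h z).re - 1 : ℝ) : ℂ) * (r / z) ^ k) =
      fun z ↦ h z * (r / z) ^ k + conj (h z - 1) * (r / z) ^ k := by
    ext z
    rw [← add_mul, map_sub, map_one, ← add_sub_assoc, add_conj]
    push_cast
    rfl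
  rw [integrand_eq, Real.circleAverage_fun_add, circleAverage_mul_div_pow hr hh,
    circleAverage_conj_mul_div_pow hr hsub (by simp [h0]), add_zero]
  · exact (hcont.mul hdiv).circleIntegrable hr.le
  · exact (((hcont.sub continuousOn_const).star).mul hdiv).circleIntegrable hr.le

theorem rescale_taylorSeries_mem_closedConvexHull (hr : 0 < r) (hh : DiffContOnCl ℂ h (ball 0 r))
    (h0 : h 0 = 1) (hre : ∀ z ∈ sphere 0 r, 1 / 2 ≤ (h z).re) :
    PowerSeries.rescale (r : ℂ) (taylorSeries h) ∈
      closedConvexHull ℝ (invPowSeries 0 '' sphere 0 1) := by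
  let w (θ : ℝ) : ℝ := (2 * Real.pi)⁻¹ * (2 * (h (circleMap 0 r θ)).re - 1)
  have circleMap_mem (θ : ℝ) : circleMap 0 r θ ∈ sphere (0 : ℂ) r := circleMap_mem_sphere _ hr.le _
  have hcont : Continuous fun θ ↦ (h (circleMap 0 r θ)).re :=
    continuous_re.comp <| (hh.continuousOn_ball.mono sphere_subset_closedBall).comp_continuous
      (continuous_circleMap 0 r) circleMap_mem
  have hcircle : Continuous fun θ ↦ (r : ℂ) / circleMap 0 r θ :=
    continuous_const.div (continuous_circleMap 0 r) fun _ ↦ circleMap_ne_center hr.ne'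
  have coeff_eq (k : ℕ) : taylorCoeff h k * r ^ k =
      ∫ θ in 0..2 * Real.pi, w θ • ((r : ℂ) / circleMap 0 r θ) ^ k := by
    rw [← circleAverage_two_mul_re_sub_one_mul_div_pow hr hh h0, Real.circleAverage_def,
      ← intervalIntegral.integral_smul]
    simp only [w, mul_smul, real_smul]
  have hw : Continuous w :=
    continuous_const.mul ((continuous_const.mul hcont).sub continuous_const)
  have hw1 : ∫ θ in 0..2 * Real.pi, w θ = 1 := by
    have integral_ofReal : ∫ θ in 0..2 * Real.pi, (w θ : ℂ) = 1 := by
      simpa [taylorCoeff, h0] using (coeff_eq 0).symm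
    exact_mod_cast intervalIntegral.integral_ofReal.symm.trans integral_ofReal
  refine powerSeries_mem_of_coeff_eq_intervalIntegral convex_closedConvexHull
    isClosed_closedConvexHull Real.two_pi_pos.le hw (fun θ _ ↦ ?_) hw1
    ((continuous_invPowSeries 0).comp hcircle) (fun θ _ ↦ ?_) fun k ↦ ?_
  · have := hre _ (circleMap_mem θ)
    exact mul_nonneg (by positivity) (by linarith)
  · refine subset_closedConvexHull (mem_image_of_mem _ ?_)
    simp [abs_of_pos hr, hr.ne']
  · simp [coeff_invPowSeries, coeff_eq, mul_comm]

theorem taylorSeries_mem_closedConvexHull_of_half_le_re (hh : DifferentiableOn ℂ h (ball 0 1))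
    (h0 : h 0 = 1) (hre : ∀ z ∈ ball 0 1, 1 / 2 ≤ (h z).re) :
    taylorSeries h ∈ closedConvexHull ℝ (invPowSeries 0 '' sphere 0 1) := by
  have tendsto_rescale : Filter.Tendsto
      (fun r : ℝ ↦ PowerSeries.rescale (r : ℂ) (taylorSeries h)) (𝓝[<] 1) (𝓝 (taylorSeries h)) := by
    rw [PowerSeries.WithPiTopology.tendsto_iff_coeff_tendsto]
    intro k
    have : Continuous fun r : ℝ ↦ (r : ℂ) ^ k * taylorCoeff h k := by fun_prop
    simpa using (this.tendsto 1).mono_left nhdsWithin_le_nhds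
  refine isClosed_closedConvexHull.mem_of_tendsto tendsto_rescale ?_
  filter_upwards [Ioo_mem_nhdsLT zero_lt_one] with r ⟨hr0, hr1⟩
  have hsub : closedBall (0 : ℂ) r ⊆ ball 0 1 := closedBall_subset_ball hr1
  refine rescale_taylorSeries_mem_closedConvexHull hr0 ?_ h0
    fun z hz ↦ hre z (hsub (sphere_subset_closedBall hz))
  exact (hh.mono (closure_ball_subset_closedBall.trans hsub)).diffContOnCl

end Herglotz

section Caratheodory

theorem re_pos_of_forall_ne {Q : ℂ → ℂ} {U : Set ℂ} {c : ℂ} (hU : IsOpen U)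
    (hUc : IsPreconnected U) (hQ : DifferentiableOn ℂ Q U) (hc : c ∈ U)
    (hpos : ∀ z ∈ U, z ≠ c → 0 < (Q z).re) : 0 < (Q c).re := by
  by_contra! hle
  have norm_exp_neg (z : ℂ) : ‖exp (-Q z)‖ = Real.exp (-(Q z).re) := by simp [norm_exp]
  have hmax : IsMaxOn (norm ∘ fun z ↦ exp (-Q z)) U c := by
    refine isMaxOn_iff.2 fun z hz ↦ ?_
    simp only [Function.comp_apply, norm_exp_neg, Real.exp_le_exp]
    rcases eq_or_ne z c with rfl | hzc
    · rfl
    · linarith [hpos z hz hzc]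
  have hconst := norm_eqOn_of_isPreconnected_of_isMaxOn hUc hU hQ.fun_neg.cexp hc hmax
  obtain ⟨z, hz, hzc⟩ : ∃ z, z ∈ U ∧ z ≠ c :=
    (((hU.eventually_mem hc).filter_mono nhdsWithin_le_nhds).and
      self_mem_nhdsWithin : ∀ᶠ z in 𝓝[≠] c, _).exists
  have hre : (Q z).re = (Q c).re := by simpa [norm_exp_neg] using hconst hz
  linarith [hpos z hz hzc]

theorem taylorSeries_mem_closedConvexHull_of_re_mul_pos {q : ℂ → ℂ} {e : ℂ} (he : ‖e‖ = 1)
    (hq : DifferentiableOn ℂ q (ball 0 1)) (hq0 : q 0 = 1)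
    (hpos : ∀ z ∈ ball 0 1, 0 < (e * q z).re) :
    taylorSeries q ∈ closedConvexHull ℝ
      ((fun x ↦ (1 + .C (conj e ^ 2 * x) * .X) * invPowSeries 0 x) '' sphere 0 1) := by
  have he0 : 0 < e.re := by simpa [hq0] using hpos 0 (mem_ball_self one_pos)
  have hmul : e * conj e = 1 := by rw [mul_conj', he]; norm_num
  have hadd : e + conj e = (2 * e.re : ℝ) := add_conj e
  let h (z : ℂ) : ℂ := (e * q z + conj e) / (2 * e.re : ℝ)
  have hh : DifferentiableOn ℂ h (ball 0 1) := ((hq.const_mul e).add_const _).div_const _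
  have hTh : taylorSeries h ∈ closedConvexHull ℝ (invPowSeries 0 '' sphere 0 1) := by
    refine taylorSeries_mem_closedConvexHull_of_half_le_re hh ?_ fun z hz ↦ ?_
    · simp only [h, hq0, mul_one, hadd]
      exact div_self (ofReal_ne_zero.2 (by positivity))
    · rw [div_ofReal_re, div_le_div_iff₀ two_pos (by positivity), add_re, conj_re]
      linarith [hpos z hz]
  have q_eq (z : ℂ) : q z = (1 + conj e ^ 2) * h z + -conj e ^ 2 := by
    have hne : ((2 * e.re : ℝ) : ℂ) ≠ 0 := ofReal_ne_zero.2 (by positivity)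
    have : (1 + conj e ^ 2) = conj e * (2 * e.re : ℝ) := by
      rw [← hadd]; linear_combination - hmul
    simp only [h]
    rw [this, mul_assoc, mul_div_cancel₀ _ hne]
    linear_combination (- q z) * hmul
  have hanalytic : AnalyticAt ℂ h 0 := hh.analyticAt (ball_mem_nhds _ one_pos)
  rw [funext q_eq, taylorSeries_const_mul_add_const hanalytic]
  convert mul_add_mem_closedConvexHull_image (.C (1 + conj e ^ 2)) (.C (-conj e ^ 2)) hTh using 2
  rw [image_image]
  refine image_congr fun x _ ↦ ?_
  have hinv := one_sub_C_mul_X_mul_invPowSeries_zero x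
  simp only [map_add, map_mul, map_one, map_neg]
  linear_combination -.C (conj e ^ 2) * hinv

end Caratheodory

section Jack

theorem norm_le_div_mul_norm_of_isMaxOn {ω : ℂ → ℂ} {z₀ : ℂ}
    (hω : DifferentiableOn ℂ ω (ball 0 ‖z₀‖)) (h0 : ω 0 = 0)
    (hmax : IsMaxOn (norm ∘ ω) (closedBall 0 ‖z₀‖) z₀) {z : ℂ} (hz : z ∈ closedBall 0 ‖z₀‖) :
    ‖ω z‖ ≤ ‖ω z₀‖ / ‖z₀‖ * ‖z‖ := by
  rcases (mem_closedBall_zero_iff.1 hz).lt_or_eq with hlt | heq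
  · have hmaps : MapsTo ω (ball 0 ‖z₀‖) (closedBall (ω 0) ‖ω z₀‖) := fun y hy ↦ by
      rw [h0, mem_closedBall_zero_iff]
      exact hmax (ball_subset_closedBall hy)
    simpa [h0] using dist_le_div_mul_dist_of_mapsTo_ball hω hmaps (mem_ball_zero_iff.2 hlt)
  · rcases eq_or_ne z₀ 0 with rfl | hz₀
    · rw [norm_zero, norm_eq_zero] at heq
      simp [heq, h0]
    · rw [heq, div_mul_cancel₀ _ (norm_ne_zero_iff.2 hz₀)]
      exact hmax hz

open scoped ComplexOrder in
theorem nonneg_of_forall_re_mul_sub_one_nonpos {c : ℂ}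
    (hc : ∀ ζ : ℂ, ‖ζ‖ ≤ 1 → (c * (ζ - 1)).re ≤ 0) : 0 ≤ c := by
  obtain ⟨ζ, hζ, hcζ⟩ := exists_norm_eq_mul_self c
  have hle := hc ζ hζ.le
  rw [mul_sub, mul_comm, ← hcζ, mul_one, sub_re, ofReal_re] at hle
  exact re_eq_norm.1 (le_antisymm (re_le_norm c) (by linarith))

theorem inner_self_mul (w c : ℂ) : inner ℝ w (w * c) = ‖w‖ ^ 2 * c.re := by
  rw [Complex.inner, ← re_ofReal_mul, ofReal_pow, ← mul_conj', mul_right_comm]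

open scoped ComplexOrder in
/-- **Jack's lemma**. By the Schwarz lemma `z₀` also maximizes `‖ω z‖² - (‖ω z₀‖ / ‖z₀‖)² ‖z‖²`,
whose derivatives along the segments from `z₀` into the disk are therefore nonpositive. -/
theorem one_le_mul_deriv_div_of_isMaxOn {ω : ℂ → ℂ} {z₀ : ℂ}
    (hω : DifferentiableOn ℂ ω (ball 0 ‖z₀‖)) (hω₀ : DifferentiableAt ℂ ω z₀) (h0 : ω 0 = 0)
    (hne : ω z₀ ≠ 0) (hmax : IsMaxOn (norm ∘ ω) (closedBall 0 ‖z₀‖) z₀) :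
    1 ≤ z₀ * deriv ω z₀ / ω z₀ := by
  have hz₀ : z₀ ≠ 0 := fun h ↦ hne (h ▸ h0)
  rw [← sub_nonneg]
  refine nonneg_of_forall_re_mul_sub_one_nonpos fun ζ hζ ↦ ?_
  have hFmax : IsMaxOn (fun z ↦ ‖ω z‖ ^ 2 - (‖ω z₀‖ / ‖z₀‖) ^ 2 * ‖z‖ ^ 2)
      (closedBall 0 ‖z₀‖) z₀ := by
    refine isMaxOn_iff.2 fun z hz ↦ ?_
    have hle := norm_le_div_mul_norm_of_isMaxOn hω h0 hmax hz
    rw [← mul_pow, ← mul_pow, div_mul_cancel₀ _ (norm_ne_zero_iff.2 hz₀), sub_self, sub_nonpos]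
    gcongr
  have hF := (hω₀.hasDerivAt.hasFDerivAt.restrictScalars ℝ).norm_sq.sub
    (((hasFDerivAt_id z₀).norm_sq).const_mul ((‖ω z₀‖ / ‖z₀‖) ^ 2))
  have hsegment : segment ℝ z₀ (z₀ + z₀ * (ζ - 1)) ⊆ closedBall 0 ‖z₀‖ := by
    refine (convex_closedBall _ _).segment_subset (by simp) ?_
    rw [mem_closedBall_zero_iff, mul_sub, mul_one, add_sub_cancel, norm_mul]
    exact mul_le_of_le_one_right (norm_nonneg _) hζ
  have hnonpos : 2 * inner ℝ (ω z₀) (z₀ * (ζ - 1) * deriv ω z₀) -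
      (‖ω z₀‖ / ‖z₀‖) ^ 2 * (2 * inner ℝ z₀ (z₀ * (ζ - 1))) ≤ 0 := by
    simpa [-Complex.inner] using
      hFmax.localize.hasFDerivWithinAt_nonpos hF.hasFDerivWithinAt
        (mem_posTangentConeAt_of_segment_subset hsegment)
  have hdir : z₀ * (ζ - 1) * deriv ω z₀ = ω z₀ * (z₀ * deriv ω z₀ / ω z₀ * (ζ - 1)) := by
    field_simp
  rw [hdir, inner_self_mul, inner_self_mul] at hnonpos
  have hscale : (‖ω z₀‖ / ‖z₀‖) ^ 2 * ‖z₀‖ ^ 2 = ‖ω z₀‖ ^ 2 := by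
    rw [← mul_pow, div_mul_cancel₀ _ (norm_ne_zero_iff.2 hz₀)]
  rw [sub_one_mul, sub_re]
  refine nonpos_of_mul_nonpos_right ?_ (sq_pos_of_pos (norm_pos_iff.2 hne))
  linear_combination (hnonpos + 2 * (ζ - 1).re * hscale) / 2

end Jack

section MarxStrohhacker

theorem exists_mul_deriv_eq_of_ne_zero {ω : ℂ → ℂ} {R : ℝ} {z : ℂ}
    (hω : DifferentiableOn ℂ ω (ball 0 R)) (h0 : ω 0 = 0) (hz : z ∈ ball 0 R) (hne : ω z ≠ 0) :
    ∃ z₀ ∈ ball 0 R, ‖ω z‖ ≤ ‖ω z₀‖ ∧ ∃ k : ℝ, 1 ≤ k ∧ z₀ * deriv ω z₀ = k * ω z₀ := by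
  have hsub : closedBall 0 ‖z‖ ⊆ ball (0 : ℂ) R :=
    closedBall_subset_ball (mem_ball_zero_iff.1 hz)
  obtain ⟨z₀, hz₀, hmax⟩ := (isCompact_closedBall (0 : ℂ) ‖z‖).exists_isMaxOn
    ⟨z, by simp⟩ (hω.continuousOn.mono hsub).norm
  have hle : ‖ω z‖ ≤ ‖ω z₀‖ := hmax (by simp)
  have hne₀ : ω z₀ ≠ 0 := norm_pos_iff.1 ((norm_pos_iff.2 hne).trans_le hle)
  have hball : closedBall (0 : ℂ) ‖z₀‖ ⊆ closedBall 0 ‖z‖ :=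
    closedBall_subset_closedBall (mem_closedBall_zero_iff.1 hz₀)
  have hjack := one_le_mul_deriv_div_of_isMaxOn
    (hω.mono (ball_subset_closedBall.trans (hball.trans hsub)))
    (hω.differentiableAt (isOpen_ball.mem_nhds (hsub hz₀))) h0 hne₀ (hmax.on_subset hball)
  rw [← ofReal_one] at hjack
  have hreal := eq_re_of_ofReal_le hjack
  rw [hreal, real_le_real] at hjack
  exact ⟨z₀, hsub hz₀, hle, _, hjack, (div_eq_iff hne₀).1 hreal⟩

theorem norm_one_sub_inv_lt_one_iff {w : ℂ} (hw : w ≠ 0) : ‖1 - w⁻¹‖ < 1 ↔ 1 / 2 < w.re := by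
  have hquot : 1 - w⁻¹ = (w - 1) / w := by field_simp
  rw [hquot, norm_div, div_lt_one (norm_pos_iff.2 hw), ← sq_lt_sq₀ (norm_nonneg _) (norm_nonneg _),
    ← normSq_eq_norm_sq, ← normSq_eq_norm_sq, normSq_sub, map_one, map_one, mul_one]
  constructor <;> intro h <;> linarith

/-- The **Marx–Strohhäcker theorem**, in terms of `h z = √(g z / z)` for a starlike `g`. If it
failed, Jack's lemma for `1 - 1 / h` would give a point with `z h' / h = k (h - 1)`, `k ≥ 1` and
`re h ≤ 1 / 2`. -/
theorem half_lt_re_of_re_one_add_pos {h : ℂ → ℂ} (hh : DifferentiableOn ℂ h (ball 0 1))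
    (h0 : h 0 = 1) (hne : ∀ z ∈ ball 0 1, h z ≠ 0)
    (hre : ∀ z ∈ ball (0 : ℂ) 1 \ {0}, 0 < (1 + 2 * (z * deriv h z / h z)).re) {z : ℂ}
    (hz : z ∈ ball 0 1) : 1 / 2 < (h z).re := by
  rw [← norm_one_sub_inv_lt_one_iff (hne z hz)]
  by_contra! hω
  obtain ⟨z₀, hz₀, hle, k, hk, hjack⟩ := exists_mul_deriv_eq_of_ne_zero
    (ω := fun y ↦ 1 - (h y)⁻¹) ((hh.fun_inv hne).const_sub 1) (by simp [h0]) hz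
    (norm_pos_iff.1 (one_pos.trans_le hω))
  have hre₀ : (h z₀).re ≤ 1 / 2 :=
    not_lt.1 fun hlt ↦ ((norm_one_sub_inv_lt_one_iff (hne z₀ hz₀)).2 hlt).not_ge (hω.trans hle)
  have hz₀0 : z₀ ≠ 0 := by
    rintro rfl
    norm_num [h0] at hre₀
  have hderiv : deriv (fun y ↦ 1 - (h y)⁻¹) z₀ = deriv h z₀ / h z₀ ^ 2 := by
    have hd := hh.hasDerivAt (isOpen_ball.mem_nhds hz₀)
    simpa [neg_div] using ((hd.fun_inv (hne z₀ hz₀)).const_sub 1).deriv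
  have hlog : z₀ * deriv h z₀ / h z₀ = k * (h z₀ - 1) := by
    have := hne z₀ hz₀
    rw [hderiv] at hjack
    field_simp at hjack ⊢
    linear_combination hjack
  have hpos := hre z₀ ⟨hz₀, hz₀0⟩
  have hval : (1 + 2 * (k * (h z₀ - 1))).re = 1 + 2 * (k * ((h z₀).re - 1)) := by simp
  rw [hlog, hval] at hpos
  nlinarith

theorem exists_hasDerivAt_eqOn_exp {G : ℂ → ℂ} {c a : ℂ} {r : ℝ}
    (hG : DifferentiableOn ℂ G (ball c r)) (hne : ∀ z ∈ ball c r, G z ≠ 0) (ha : exp a = G c) :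
    ∃ φ : ℂ → ℂ, φ c = a ∧ (∀ z ∈ ball c r, HasDerivAt φ (deriv G z / G z) z) ∧
      EqOn G (fun z ↦ exp (φ z)) (ball c r) := by
  obtain ⟨φ, hφc, hφ⟩ :=
    ((hG.deriv isOpen_ball).fun_div hG hne).isExactOn_ball.with_val_at c a
  refine ⟨φ, hφc, hφ, fun z hz ↦ ?_⟩
  have hderiv : ∀ y ∈ ball c r, HasDerivAt (fun y ↦ G y * exp (-φ y)) 0 y := fun y hy ↦ by
    refine ((hG.hasDerivAt (isOpen_ball.mem_nhds hy)).mul (hφ y hy).fun_neg.cexp).congr_deriv ?_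
    have := hne y hy
    field_simp
    ring
  have hconst := isOpen_ball.is_const_of_deriv_eq_zero (convex_ball c r).isPreconnected
    (fun y hy ↦ (hderiv y hy).differentiableAt.differentiableWithinAt)
    (fun y hy ↦ (hderiv y hy).deriv) hz (mem_ball_self (pos_of_mem_ball hz))
  simpa [hφc, ← ha, exp_neg, ← div_eq_mul_inv, div_eq_one_iff_eq] using hconst

theorem IsStarlikeFn.exists_eq_mul_sq {g : ℂ → ℂ} (hg : IsStarlikeFn g) :
    ∃ h : ℂ → ℂ, DifferentiableOn ℂ h (ball 0 1) ∧ h 0 = 1 ∧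
      (∀ z ∈ ball 0 1, 1 / 2 < (h z).re) ∧ ∀ z ∈ ball 0 1, g z = z * h z ^ 2 := by
  obtain ⟨hgd, hg0, hg1, hgre⟩ := hg
  have g_eq (z : ℂ) : g z = z * dslope g 0 z := by
    simpa [hg0] using (sub_smul_dslope g 0 z).symm
  have hG : DifferentiableOn ℂ (dslope g 0) (ball 0 1) :=
    (differentiableOn_dslope (ball_mem_nhds _ one_pos)).2 hgd
  have hGne : ∀ z ∈ ball 0 1, dslope g 0 z ≠ 0 := fun z hz hzero ↦ by
    rcases eq_or_ne z 0 with rfl | hz0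
    · simp [hg1] at hzero
    · have hpos := hgre z ⟨hz, hz0⟩
      simp [g_eq z, hzero] at hpos
  obtain ⟨φ, hφ0, hφ, hexp⟩ := exists_hasDerivAt_eqOn_exp hG hGne (a := 0) (by simp [hg1])
  let h (z : ℂ) : ℂ := exp (φ z / 2)
  have h_sq (z : ℂ) : h z ^ 2 = exp (φ z) := by rw [← exp_nat_mul]; congr 1; push_cast; ring
  have hh : DifferentiableOn ℂ h (ball 0 1) := fun z hz ↦
    ((hφ z hz).div_const 2).cexp.differentiableAt.differentiableWithinAt
  have g_eq_h : ∀ z ∈ ball 0 1, g z = z * h z ^ 2 := fun z hz ↦ by rw [g_eq, hexp hz, h_sq]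
  have h0 : h 0 = 1 := by simp [h, hφ0]
  have hne (z : ℂ) : h z ≠ 0 := exp_ne_zero _
  refine ⟨h, hh, h0, fun z hz ↦ half_lt_re_of_re_one_add_pos hh h0 (fun z _ ↦ hne z) ?_ hz, g_eq_h⟩
  intro z hz
  have hnhds : ball 0 1 ∈ 𝓝 z := isOpen_ball.mem_nhds hz.1
  have hderiv : deriv g z = h z ^ 2 + z * (2 * h z * deriv h z) := by
    rw [(Filter.eventuallyEq_of_mem hnhds g_eq_h).deriv_eq]
    simpa using ((hasDerivAt_id' z).fun_mul ((hh.hasDerivAt hnhds).fun_pow 2)).deriv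
  convert hgre z hz using 2
  rw [hderiv, g_eq_h z hz.1]
  have := hne z
  have : z ≠ 0 := hz.2
  field_simp

end MarxStrohhacker

section CloseToConvex

/-- The expansions of `(1 + cX) (1 - aX)⁻³` with `‖c‖ ≤ 1` and `‖a‖ ≤ 1`, whose closed convex hull
contains the derivatives of all close-to-convex functions. The parameters range over disks rather
than circles because averages of products of kernels leave the circle. -/
def closeToConvexKernels : Set ℂ⟦X⟧ :=
  image2 (fun c a ↦ (1 + .C c * .X) * invPowSeries 2 a) (closedBall 0 1) (closedBall 0 1)

theorem invPowSeries_zero_mul_mul_mem_closedConvexHull {s : Set ℂ} (hs : Convex ℝ s) {x y z : ℂ}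
    (hx : x ∈ s) (hy : y ∈ s) (hz : z ∈ s) :
    invPowSeries 0 x * invPowSeries 0 y * invPowSeries 0 z ∈
      closedConvexHull ℝ (invPowSeries 2 '' s) := by
  refine mapsTo_closedConvexHull (LinearMap.mulRight ℝ (invPowSeries 0 z)).toAffineMap
    (continuous_mul_const _) ?_ (invPowSeries_mul_invPowSeries_zero_mem_closedConvexHull 0 hs hx hy)
  rintro _ ⟨a, ha, rfl⟩
  exact invPowSeries_mul_invPowSeries_zero_mem_closedConvexHull 1 hs ha hz

theorem mul_mul_mem_closedConvexHull_closeToConvexKernels {c x y z : ℂ} (hc : c ∈ closedBall 0 1)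
    (hx : x ∈ closedBall 0 1) (hy : y ∈ closedBall 0 1) (hz : z ∈ closedBall 0 1) :
    (1 + .C c * .X) * invPowSeries 0 x * (invPowSeries 0 y * invPowSeries 0 z) ∈
      closedConvexHull ℝ closeToConvexKernels := by
  rw [mul_assoc, ← mul_assoc (invPowSeries 0 x)]
  refine mapsTo_closedConvexHull (LinearMap.mulLeft ℝ (1 + .C c * .X)).toAffineMap
    (continuous_const_mul _) ?_
    (invPowSeries_zero_mul_mul_mem_closedConvexHull (convex_closedBall 0 1) hx hy hz)
  rintro _ ⟨a, ha, rfl⟩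
  exact subset_closedConvexHull (mem_image2_of_mem hc ha)

theorem taylorSeries_mul_sq_mem_closedConvexHull_closeToConvexKernels {q h : ℂ → ℂ} {e : ℂ}
    (he : ‖e‖ = 1) (hq : DifferentiableOn ℂ q (ball 0 1)) (hq0 : q 0 = 1)
    (hqre : ∀ z ∈ ball 0 1, 0 < (e * q z).re) (hh : DifferentiableOn ℂ h (ball 0 1)) (h0 : h 0 = 1)
    (hre : ∀ z ∈ ball 0 1, 1 / 2 ≤ (h z).re) :
    taylorSeries (fun z ↦ q z * (h z * h z)) ∈ closedConvexHull ℝ closeToConvexKernels := by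
  have hnhds : ball (0 : ℂ) 1 ∈ 𝓝 0 := ball_mem_nhds _ one_pos
  have hTh := taylorSeries_mem_closedConvexHull_of_half_le_re hh h0 hre
  have hTq := taylorSeries_mem_closedConvexHull_of_re_mul_pos he hq hq0 hqre
  have hha := hh.analyticAt hnhds
  rw [taylorSeries_mul (hq.analyticAt hnhds) (hha.fun_mul hha), taylorSeries_mul hha hha]
  refine closedConvexHull_min ?_ convex_closedConvexHull isClosed_closedConvexHull
    (mul_mem_closedConvexHull_mul hTq (mul_mem_closedConvexHull_mul hTh hTh))
  rintro _ ⟨_, ⟨x, hx, rfl⟩, _, ⟨_, ⟨y, hy, rfl⟩, _, ⟨z, hz, rfl⟩, rfl⟩, rfl⟩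
  refine mul_mul_mem_closedConvexHull_closeToConvexKernels ?_ (sphere_subset_closedBall hx)
    (sphere_subset_closedBall hy) (sphere_subset_closedBall hz)
  simp [he, mem_sphere_zero_iff_norm.1 hx]

theorem IsCloseToConvex.exists_deriv_eq_mul_sq {f : ℂ → ℂ} (hf : IsCloseToConvex f) :
    ∃ (e : ℂ) (q h : ℂ → ℂ), ‖e‖ = 1 ∧ DifferentiableOn ℂ q (ball 0 1) ∧ q 0 = 1 ∧
      (∀ z ∈ ball 0 1, 0 < (e * q z).re) ∧ DifferentiableOn ℂ h (ball 0 1) ∧ h 0 = 1 ∧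
      (∀ z ∈ ball 0 1, 1 / 2 ≤ (h z).re) ∧ ∀ z ∈ ball 0 1, deriv f z = q z * (h z * h z) := by
  obtain ⟨hfd, -, hf1, θ, g, hg, hre⟩ := hf
  obtain ⟨h, hh, h0, hhre, hgh⟩ := hg.exists_eq_mul_sq
  have hne : ∀ z ∈ ball 0 1, h z ≠ 0 := fun z hz hzero ↦ by
    have := hhre z hz
    norm_num [hzero] at this
  let q (z : ℂ) : ℂ := deriv f z / (h z * h z)
  have hq : DifferentiableOn ℂ q (ball 0 1) := (hfd.deriv isOpen_ball).fun_div (hh.fun_mul hh)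
    fun z hz ↦ mul_self_ne_zero.2 (hne z hz)
  have hqre : ∀ z ∈ ball 0 1, z ≠ 0 → 0 < (exp (θ * I) * q z).re := fun z hz hz0 ↦ by
    convert hre z ⟨hz, hz0⟩ using 2
    have := hne z hz
    simp only [q, hgh z hz]
    field_simp
  have hqre0 := re_pos_of_forall_ne isOpen_ball (convex_ball 0 1).isPreconnected
    (hq.const_mul (exp (θ * I))) (mem_ball_self one_pos) hqre
  refine ⟨exp (θ * I), q, h, norm_exp_ofReal_mul_I θ, hq, by simp [q, hf1, h0], fun z hz ↦ ?_, hh,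
    h0, fun z hz ↦ (hhre z hz).le, fun z hz ↦ ?_⟩
  · rcases eq_or_ne z 0 with rfl | hz0
    exacts [hqre0, hqre z hz hz0]
  · exact (div_mul_cancel₀ _ (mul_self_ne_zero.2 (hne z hz))).symm

theorem IsCloseToConvex.taylorSeries_deriv_mem_closedConvexHull {f : ℂ → ℂ}
    (hf : IsCloseToConvex f) :
    taylorSeries (deriv f) ∈ closedConvexHull ℝ closeToConvexKernels := by
  obtain ⟨e, q, h, he, hq, hq0, hqre, hh, h0, hre, hderiv⟩ := hf.exists_deriv_eq_mul_sq
  rw [taylorSeries_congr (Filter.eventuallyEq_of_mem (ball_mem_nhds _ one_pos) hderiv)]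
  exact taylorSeries_mul_sq_mem_closedConvexHull_closeToConvexKernels he hq hq0 hqre hh h0 hre

end CloseToConvex

section Zalcman

theorem mul_sq_add_le_of_le_div {n lam : ℝ} (hn : 1 ≤ n) (hlam : lam ≤ 2 * n / (n ^ 2 - n + 1))
    (p r : ℝ) : lam * ((n - 1) / 2 * r + p) ^ 2 ≤ (n - 1) / 2 * r ^ 2 + 2 * n * p ^ 2 := by
  have hden : 0 < n ^ 2 - n + 1 := by nlinarith
  calc lam * ((n - 1) / 2 * r + p) ^ 2
      ≤ 2 * n / (n ^ 2 - n + 1) * ((n - 1) / 2 * r + p) ^ 2 := by gcongr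
    _ ≤ (n - 1) / 2 * r ^ 2 + 2 * n * p ^ 2 := by
      rw [div_mul_eq_mul_div, div_le_iff₀ hden]
      linear_combination (n - 1) / 2 * sq_nonneg (r - 2 * n * p)

theorem mul_sq_re_sub_re_le {n lam : ℝ} (hn : 1 ≤ n) (hlam : lam ≤ 2 * n / (n ^ 2 - n + 1))
    {A B : ℂ} (hA : ‖A‖ ≤ 1) (hB : ‖B‖ ≤ 1) :
    lam * (((n + 1) * A + (n - 1) * B) / 2).re ^ 2 - (n * A ^ 2 + (n - 1) * (A * B)).re ≤
      2 * n - 1 := by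
  have hA' : A.re ^ 2 + A.im ^ 2 ≤ 1 := by
    rw [← normSq_add_mul_I, re_add_im, normSq_eq_norm_sq]
    exact pow_le_one₀ (norm_nonneg _) hA
  have hB' : B.re ^ 2 + B.im ^ 2 ≤ 1 := by
    rw [← normSq_add_mul_I, re_add_im, normSq_eq_norm_sq]
    exact pow_le_one₀ (norm_nonneg _) hB
  have hre : (((n + 1) * A + (n - 1) * B) / 2).re = (n - 1) / 2 * (A.re + B.re) + A.re := by
    simp only [div_ofNat_re, add_re, mul_re, ofReal_re, one_re, add_im, ofReal_im, one_im, add_zero,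
      zero_mul, sub_zero, sub_re, sub_im, sub_self]
    ring
  have hre' : (n * A ^ 2 + (n - 1) * (A * B)).re =
      n * (A.re ^ 2 - A.im ^ 2) + (n - 1) * (A.re * B.re - A.im * B.im) := by
    simp [pow_two]
  rw [hre, hre']
  have hquad := mul_sq_add_le_of_le_div hn hlam A.re (A.re + B.re)
  have him := two_mul_le_add_sq A.im B.im
  linear_combination hquad + (n - 1) / 2 * him + (n + (n - 1) / 2) * hA' + (n - 1) / 2 * hB'

/-- The real part of `λ (u aₙ)² - u² a₂ₙ₋₁` with `n = m + 1`, after enlarging `re (u aₙ)²` to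
`(re (u aₙ))²` to make it convex, as a function of the Taylor series of `f' = ∑ k aₖ zᵏ⁻¹`. -/
noncomputable def zalcmanFunctional (lam : ℝ) (u : ℂ) (m : ℕ) (p : ℂ⟦X⟧) : ℝ :=
  lam * (u * (PowerSeries.coeff m p / (m + 1))).re ^ 2 -
    (u ^ 2 * (PowerSeries.coeff (2 * m) p / (2 * m + 1))).re

theorem continuous_zalcmanFunctional (lam : ℝ) (u : ℂ) (m : ℕ) :
    Continuous (zalcmanFunctional lam u m) := by
  have hcoeff (k : ℕ) : Continuous fun p : ℂ⟦X⟧ ↦ PowerSeries.coeff k p :=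
    PowerSeries.WithPiTopology.continuous_coeff ℂ k
  unfold zalcmanFunctional
  fun_prop

theorem isLinearMap_re_mul_coeff_div (u v : ℂ) (k : ℕ) :
    IsLinearMap ℝ fun p : ℂ⟦X⟧ ↦ (u * (PowerSeries.coeff k p / v)).re := by
  constructor
  · intro p q
    rw [map_add, add_div, mul_add, add_re]
  · intro c p
    have coeff_smul : PowerSeries.coeff k (c • p) = c * PowerSeries.coeff k p := rfl
    rw [coeff_smul, mul_div_assoc, mul_left_comm, re_ofReal_mul, smul_eq_mul]

theorem convexOn_zalcmanFunctional {lam : ℝ} (hlam : 0 ≤ lam) (u : ℂ) (m : ℕ) :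
    ConvexOn ℝ univ (zalcmanFunctional lam u m) := by
  have hsq : ConvexOn ℝ univ fun x : ℝ ↦ lam * x ^ 2 := (even_two.convexOn_pow).smul hlam
  exact (hsq.comp_linearMap (isLinearMap_re_mul_coeff_div u (m + 1) m).mk').sub
    ((isLinearMap_re_mul_coeff_div (u ^ 2) (2 * m + 1) (2 * m)).mk'.concaveOn convex_univ)

theorem coeff_one_add_C_mul_X_mul_invPowSeries_two (c a : ℂ) (k : ℕ) :
    PowerSeries.coeff k ((1 + .C c * .X) * invPowSeries 2 a) / (k + 1) =
      ((k + 2) * a ^ k + k * (c * a ^ (k - 1))) / 2 := by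
  have hk : (k + 1 : ℂ) ≠ 0 := k.cast_add_one_ne_zero
  rw [div_eq_iff hk, add_mul, one_mul, map_add, mul_assoc, PowerSeries.coeff_C_mul]
  cases k with
  | zero => simp [coeff_invPowSeries]
  | succ k =>
    rw [PowerSeries.coeff_succ_X_mul, coeff_invPowSeries, coeff_invPowSeries,
      Nat.cast_choose_two, Nat.cast_choose_two]
    simp only [add_tsub_cancel_right]
    push_cast
    ring

theorem zalcmanFunctional_le_of_mem_closeToConvexKernels {lam : ℝ} {m : ℕ}
    (hlam : lam ≤ 2 * (m + 1) / ((m + 1) ^ 2 - (m + 1) + 1)) {u : ℂ} (hu : ‖u‖ = 1) {p : ℂ⟦X⟧}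
    (hp : p ∈ closeToConvexKernels) : zalcmanFunctional lam u m p ≤ 2 * (m + 1) - 1 := by
  obtain ⟨c, hc, a, ha, rfl⟩ := hp
  rw [mem_closedBall_zero_iff] at hc ha
  have hA : ‖u * a ^ m‖ ≤ 1 := by
    simpa [hu] using pow_le_one₀ (norm_nonneg a) ha
  have hB : ‖u * (c * a ^ (m - 1))‖ ≤ 1 := by
    simpa [hu] using mul_le_one₀ hc (by positivity) (pow_le_one₀ (norm_nonneg a) ha)
  have hm : (1 : ℝ) ≤ m + 1 := by simp
  convert mul_sq_re_sub_re_le hm hlam hA hB using 1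
  have hcoeff := coeff_one_add_C_mul_X_mul_invPowSeries_two c a m
  have hcoeff_two := coeff_one_add_C_mul_X_mul_invPowSeries_two c a (2 * m)
  push_cast at hcoeff_two
  rw [zalcmanFunctional, hcoeff, hcoeff_two]
  congr 4
  · push_cast
    ring
  · push_cast
    cases m with
    | zero => simp
    | succ m =>
      rw [show 2 * (m + 1) - 1 = 2 * m + 1 by lia, Nat.add_sub_cancel]
      push_cast
      ring

theorem zalcmanFunctional_le_of_mem_closedConvexHull {lam : ℝ} {m : ℕ} (hlam0 : 0 ≤ lam)
    (hlam : lam ≤ 2 * (m + 1) / ((m + 1) ^ 2 - (m + 1) + 1)) {u : ℂ} (hu : ‖u‖ = 1) {p : ℂ⟦X⟧}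
    (hp : p ∈ closedConvexHull ℝ closeToConvexKernels) :
    zalcmanFunctional lam u m p ≤ 2 * (m + 1) - 1 := by
  refine closedConvexHull_min
    (fun q hq ↦ zalcmanFunctional_le_of_mem_closeToConvexKernels hlam hu hq) ?_ ?_ hp
  · have hconv := (convexOn_zalcmanFunctional hlam0 u m).convex_le (2 * (m + 1) - 1)
    simp only [mem_univ, true_and] at hconv
    exact hconv
  · exact isClosed_le (continuous_zalcmanFunctional lam u m) continuous_const

theorem exists_norm_eq_sq_mul_self (w : ℂ) : ∃ u : ℂ, ‖u‖ = 1 ∧ ‖w‖ = u ^ 2 * w := by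
  obtain ⟨v, hv, hvw⟩ := exists_norm_eq_mul_self w
  obtain ⟨u, rfl⟩ := IsAlgClosed.exists_pow_nat_eq v two_pos
  exact ⟨u, by rwa [norm_pow, pow_eq_one_iff_of_nonneg (norm_nonneg u) two_ne_zero] at hv, hvw⟩

theorem re_sq_le_sq_re (z : ℂ) : (z ^ 2).re ≤ z.re ^ 2 := by
  rw [pow_two z, mul_re, ← pow_two, sub_le_self_iff]
  exact mul_self_nonneg _

theorem IsCloseToConvex.mul_sq_re_taylorCoeff_sub_re_le {f : ℂ → ℂ} (hf : IsCloseToConvex f)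
    {lam : ℝ} {m : ℕ} (hlam0 : 0 ≤ lam)
    (hlam : lam ≤ 2 * (m + 1) / ((m + 1) ^ 2 - (m + 1) + 1)) {u : ℂ} (hu : ‖u‖ = 1) :
    lam * (u * taylorCoeff f (m + 1)).re ^ 2 - (u ^ 2 * taylorCoeff f (2 * m + 1)).re ≤
      2 * (m + 1) - 1 := by
  have coeff_div (k : ℕ) : PowerSeries.coeff k (taylorSeries (deriv f)) / (k + 1) =
      taylorCoeff f (k + 1) := by
    rw [coeff_taylorSeries, taylorCoeff_deriv, mul_div_cancel_left₀ _ k.cast_add_one_ne_zero]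
  have coeff_div_two := coeff_div (2 * m)
  push_cast at coeff_div_two
  have hbound := zalcmanFunctional_le_of_mem_closedConvexHull hlam0 hlam hu
    hf.taylorSeries_deriv_mem_closedConvexHull
  rwa [zalcmanFunctional, coeff_div, coeff_div_two] at hbound

theorem generalized_zalcman_closeToConvex_small_lambda_general
    (n : ℕ) (hn : 1 ≤ n) (lam : ℝ) (hlam0 : 0 ≤ lam)
    (hlam : lam ≤ 2 * (n : ℝ) / ((n : ℝ) ^ 2 - n + 1))
    (f : ℂ → ℂ) (hf : IsCloseToConvex f) :
    ‖(lam : ℂ) * (taylorCoeff f n) ^ 2 - taylorCoeff f (2 * n - 1)‖ ≤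
      2 * (n : ℝ) - 1 := by
  obtain ⟨m, rfl⟩ := Nat.exists_eq_add_of_le' hn
  rw [show 2 * (m + 1) - 1 = 2 * m + 1 by lia]
  push_cast at hlam ⊢
  obtain ⟨u, hu, hu_eq⟩ := exists_norm_eq_sq_mul_self
    ((lam : ℂ) * taylorCoeff f (m + 1) ^ 2 - taylorCoeff f (2 * m + 1))
  calc ‖(lam : ℂ) * taylorCoeff f (m + 1) ^ 2 - taylorCoeff f (2 * m + 1)‖
      = lam * ((u * taylorCoeff f (m + 1)) ^ 2).re - (u ^ 2 * taylorCoeff f (2 * m + 1)).re := by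
        rw [← ofReal_re ‖_‖, hu_eq, ← re_ofReal_mul, ← sub_re]
        congr 1
        ring
    _ ≤ lam * (u * taylorCoeff f (m + 1)).re ^ 2 - (u ^ 2 * taylorCoeff f (2 * m + 1)).re := by
        gcongr
        exact re_sq_le_sq_re _
    _ ≤ 2 * (m + 1) - 1 := hf.mul_sq_re_taylorCoeff_sub_re_le hlam0 hlam hu

end Zalcman

theorem generalized_zalcman_closeToConvex_small_lambda
    (n : ℕ) (hn : 3 ≤ n) (lam : ℝ) (hlam1 : 0 < lam)
    (hlam2 : lam ≤ 2 * (n : ℝ) / ((n : ℝ) ^ 2 - n + 1))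
    (f : ℂ → ℂ) (hf : IsCloseToConvex f) :
    ‖(lam : ℂ) * (taylorCoeff f n) ^ 2 - taylorCoeff f (2 * n - 1)‖ ≤
      2 * (n : ℝ) - 1 :=
  generalized_zalcman_closeToConvex_small_lambda_general n (by lia) lam hlam1.le hlam2 f hf
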